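/- arXiv:math/0307021 — 4 statements merged into one kernel-verified Lean document; each statement's English description precedes it below -/
import Mathlib

section
/- Let E be a finite-dimensional real inner product space and let L be a linear subspace of E. For every linear subspace G of E with G + L = E there exists a constant C > 0 such that for every linear subspace F of E one has δ(F ∩ L, G ∩ L) ≤ C · δ(F, G). -/
/-- The Verdier distance between two linear subspaces `F` and `G` of a real inner
product space: `δ(F, G) = sup { dist(x, G) : x ∈ F, ‖x‖ = 1 }` (equal to `0` when
`F = {0}`, since then the set is empty and `sSup ∅ = 0` in `ℝ`). -/
noncomputable def verdierDist {E : Type*} [NormedAddCommGroup E] [InnerProductSpace ℝ E]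
    (F G : Submodule ℝ E) : ℝ :=
  sSup ((fun x => Metric.infDist x (G : Set E)) '' {x : E | x ∈ F ∧ ‖x‖ = 1})

/-- For a fixed subspace `L` and any subspace `G` transverse to `L` (i.e. `G + L = E`),
there is a constant `C > 0` such that `δ(F ∩ L, G ∩ L) ≤ C · δ(F, G)` for all
subspaces `F`. -/
theorem verdierDist_inf_le_of_sup_eq_top {E : Type*} [NormedAddCommGroup E]
    [InnerProductSpace ℝ E] [FiniteDimensional ℝ E]
    (L G : Submodule ℝ E) (hGL : G ⊔ L = ⊤) :
    ∃ C : ℝ, 0 < C ∧ ∀ F : Submodule ℝ E,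
      verdierDist (F ⊓ L) (G ⊓ L) ≤ C * verdierDist F G := by
  have hsurj : LinearMap.range (G.mkQ ∘ₗ L.subtype) = ⊤ := by
    rw [LinearMap.range_eq_top]
    intro q
    obtain ⟨e, rfl⟩ := G.mkQ_surjective q
    have he : e ∈ G ⊔ L := by rw [hGL]; trivial
    obtain ⟨a, ha, b, hb, rfl⟩ := Submodule.mem_sup.1 he
    refine ⟨⟨b, hb⟩, ?_⟩
    simp [(Submodule.Quotient.mk_eq_zero G).2 ha]
  obtain ⟨r, hr⟩ := LinearMap.exists_rightInverse_of_surjective _ hsurj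
  let B : E →L[ℝ] E := LinearMap.toContinuousLinearMap (L.subtype ∘ₗ r ∘ₗ G.mkQ)
  have hBL : ∀ e, B e ∈ L := fun e => (r (G.mkQ e)).2
  have hBG : ∀ e, e - B e ∈ G := by
    intro e
    rw [← Submodule.Quotient.eq]
    exact (LinearMap.congr_fun hr (G.mkQ e)).symm
  have hC : 0 < ‖B‖ + 1 := by positivity
  have key : ∀ x ∈ L, Metric.infDist x ((G ⊓ L : Submodule ℝ E) : Set E)
      ≤ (‖B‖ + 1) * Metric.infDist x (G : Set E) := by
    intro x hx
    rw [← div_le_iff₀' hC]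
    refine (Metric.le_infDist ⟨0, G.zero_mem⟩).2 ?_
    intro p hp
    rw [div_le_iff₀' hC]
    have hmem : x - B (x - p) ∈ ((G ⊓ L : Submodule ℝ E) : Set E) := by
      refine ⟨?_, L.sub_mem hx (hBL _)⟩
      have h := G.add_mem (hBG (x - p)) hp
      have h2 : x - p - B (x - p) + p = x - B (x - p) := by abel
      rwa [h2] at h
    calc Metric.infDist x ((G ⊓ L : Submodule ℝ E) : Set E)
        ≤ dist x (x - B (x - p)) := Metric.infDist_le_dist_of_mem hmem
      _ = ‖B (x - p)‖ := by rw [dist_eq_norm, sub_sub_cancel]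
      _ ≤ ‖B‖ * ‖x - p‖ := B.le_opNorm _
      _ ≤ (‖B‖ + 1) * dist x p := by
        rw [dist_eq_norm]
        gcongr
        linarith
  refine ⟨‖B‖ + 1, hC, fun F => ?_⟩
  unfold verdierDist
  apply Real.sSup_le
  · rintro _ ⟨x, ⟨hx, hx1⟩, rfl⟩
    refine (key x hx.2).trans (mul_le_mul_of_nonneg_left ?_ hC.le)
    apply le_csSup
    · refine ⟨1, ?_⟩
      rintro _ ⟨y, ⟨_, hy1⟩, rfl⟩
      have h := Metric.infDist_le_dist_of_mem (x := y) (G.zero_mem : (0 : E) ∈ (G : Set E))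
      rwa [dist_zero_right, hy1] at h
    · exact ⟨x, ⟨hx.1, hx1⟩, rfl⟩
  · refine mul_nonneg hC.le (Real.sSup_nonneg ?_)
    rintro _ ⟨y, _, rfl⟩
    exact Metric.infDist_nonneg
end

section
/- Let E be a finite-dimensional real inner product space and let G, L be linear subspaces with L⊥ ⊆ G. Then for every x ∈ L one has dist(x, G ∩ L) = dist(x, G), where dist denotes the Euclidean distance from a point to a subspace. -/
/-- If `L⊥ ⊆ G`, then for every `x ∈ L` the distance from `x` to `G ∩ L` equals
the distance from `x` to `G`. -/
theorem infDist_inf_eq_infDist_of_orthogonal_le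
    {E : Type*} [NormedAddCommGroup E] [InnerProductSpace ℝ E] [FiniteDimensional ℝ E]
    (G L : Submodule ℝ E) (hLG : Lᗮ ≤ G) :
    ∀ x ∈ L, Metric.infDist x ((G ⊓ L : Submodule ℝ E) : Set E)
      = Metric.infDist x (G : Set E) := by
  intro x hx
  have hne : ((G ⊓ L : Submodule ℝ E) : Set E).Nonempty := ⟨0, (G ⊓ L).zero_mem⟩
  apply le_antisymm
  · rw [Metric.le_infDist ⟨0, G.zero_mem⟩]
    intro g hg
    have h1 : g - L.starProjection g ∈ G := hLG (L.sub_starProjection_mem_orthogonal g)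
    have h2 : L.starProjection g ∈ G := by
      have h := G.sub_mem hg h1
      rwa [sub_sub_cancel] at h
    have h3 : L.starProjection g ∈ L := L.starProjection_apply_mem g
    refine (Metric.infDist_le_dist_of_mem
      (show L.starProjection g ∈ ((G ⊓ L : Submodule ℝ E) : Set E) from ⟨h2, h3⟩)).trans ?_
    have h4 : L.starProjection (x - g) = x - L.starProjection g := by
      rw [map_sub, Submodule.starProjection_eq_self_iff.mpr hx]
    rw [dist_eq_norm, dist_eq_norm, ← h4]
    exact L.norm_starProjection_apply_le (x - g)
  · exact Metric.infDist_le_infDist_of_subset (fun y hy => hy.1) hne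
end

section
/- Let E be a finite-dimensional real inner product space and let G, L be linear subspaces with L⊥ ⊆ G. Then for every linear subspace F of E one has δ(F ∩ L, G ∩ L) ≤ δ(F, G). -/
/-- If `L⊥ ⊆ G`, then for every subspace `F` one has `δ(F ∩ L, G ∩ L) ≤ δ(F, G)`. -/
theorem verdierDist_inf_le_of_orthogonal_le
    {E : Type*} [NormedAddCommGroup E] [InnerProductSpace ℝ E] [FiniteDimensional ℝ E]
    (G L : Submodule ℝ E) (hLG : Lᗮ ≤ G) :
    ∀ F : Submodule ℝ E, verdierDist (F ⊓ L) (G ⊓ L) ≤ verdierDist F G := by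
  intro F
  have key : ∀ x ∈ L, Metric.infDist x ((G ⊓ L : Submodule ℝ E) : Set E)
      ≤ Metric.infDist x (G : Set E) := by
    intro x hx
    refine (Metric.le_infDist ⟨0, G.zero_mem⟩).2 ?_
    intro g hg
    have hPG : L.starProjection g ∈ G := by
      have h1 : g - L.starProjection g ∈ G :=
        hLG (L.sub_starProjection_mem_orthogonal g)
      have h2 := G.sub_mem hg h1
      simpa using h2
    have hPL : L.starProjection g ∈ L := L.starProjection_apply_mem g
    refine (Metric.infDist_le_dist_of_mem
      (show L.starProjection g ∈ ((G ⊓ L : Submodule ℝ E) : Set E) from ⟨hPG, hPL⟩)).trans ?_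
    rw [dist_eq_norm, dist_eq_norm]
    have hx' : L.starProjection x = x := Submodule.starProjection_eq_self_iff.2 hx
    calc ‖x - L.starProjection g‖ = ‖L.starProjection (x - g)‖ := by rw [map_sub, hx']
      _ ≤ ‖x - g‖ := L.norm_starProjection_apply_le (x - g)
  unfold verdierDist
  apply Real.sSup_le
  · rintro _ ⟨x, ⟨hx, hn⟩, rfl⟩
    refine (key x hx.2).trans (le_csSup ?_ ⟨x, ⟨hx.1, hn⟩, rfl⟩)
    refine ⟨1, ?_⟩
    rintro _ ⟨y, ⟨_, hy⟩, rfl⟩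
    refine (Metric.infDist_le_dist_of_mem (show (0 : E) ∈ (G : Set E) from G.zero_mem)).trans ?_
    rw [dist_zero_right, hy]
  · apply Real.sSup_nonneg
    rintro _ ⟨x, _, rfl⟩
    exact Metric.infDist_nonneg
end

section
/- Let E be a finite-dimensional real vector space equipped with two inner products, with associated norms ‖·‖ and ‖·‖′, and suppose A ≥ 1 is a constant such that (1/A)·‖x‖ ≤ ‖x‖′ ≤ A·‖x‖ for all x ∈ E. Then for all linear subspaces F, G of E one has δ′(F, G) ≤ A² · δ(F, G), where δ and δ′ denote the Verdier distances computed with respect to the two inner products respectively. -/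
theorem infDist_le_mul_aux {X Y : Type*} [PseudoMetricSpace X] [PseudoMetricSpace Y]
    {s : Set X} {t : Set Y} (hs : s.Nonempty) {x : X} {y : Y} {c : ℝ} (hc : 0 < c)
    (h : ∀ g ∈ s, ∃ g' ∈ t, dist y g' ≤ c * dist x g) :
    Metric.infDist y t ≤ c * Metric.infDist x s := by
  rw [← div_le_iff₀' hc, Metric.le_infDist hs]
  intro g hg
  obtain ⟨g', hg', hd⟩ := h g hg
  rw [div_le_iff₀' hc]
  exact (Metric.infDist_le_dist_of_mem hg').trans hd

/-- A vector space equipped with two inner products is encoded as a linear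
equivalence `e : E ≃ₗ[ℝ] E'` between two inner product spaces (the identity map
of the underlying vector space).  If `(1/A)·‖x‖ ≤ ‖x‖′ ≤ A·‖x‖` for all `x`
(with `A ≥ 1`), then the Verdier distances with respect to the two inner
products satisfy `δ′(F, G) ≤ A² · δ(F, G)` for all subspaces `F`, `G`. -/
theorem verdierDist_le_of_norm_equiv
    {E E' : Type*} [NormedAddCommGroup E] [InnerProductSpace ℝ E] [FiniteDimensional ℝ E]
    [NormedAddCommGroup E'] [InnerProductSpace ℝ E'] [FiniteDimensional ℝ E']
    (e : E ≃ₗ[ℝ] E') (A : ℝ) (hA : 1 ≤ A)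
    (h₁ : ∀ x : E, ‖x‖ / A ≤ ‖e x‖) (h₂ : ∀ x : E, ‖e x‖ ≤ A * ‖x‖) :
    ∀ F G : Submodule ℝ E,
      verdierDist (F.map (e : E →ₗ[ℝ] E')) (G.map (e : E →ₗ[ℝ] E'))
        ≤ A ^ 2 * verdierDist F G := by
  intro F G
  have hA0 : 0 < A := by linarith
  have hδ : 0 ≤ verdierDist F G := by
    apply Real.sSup_nonneg
    rintro _ ⟨x, -, rfl⟩
    exact Metric.infDist_nonneg
  have hbdd : BddAbove ((fun x => Metric.infDist x (G : Set E)) '' {x : E | x ∈ F ∧ ‖x‖ = 1}) := by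
    refine ⟨1, ?_⟩
    rintro _ ⟨x, ⟨-, hx⟩, rfl⟩
    have := Metric.infDist_le_dist_of_mem (x := x) (G.zero_mem : (0 : E) ∈ (G : Set E))
    rwa [dist_zero_right, hx] at this
  have hne : (G : Set E).Nonempty := ⟨0, G.zero_mem⟩
  apply Real.sSup_le _ (by positivity)
  rintro _ ⟨_, ⟨⟨x, hxF, rfl⟩, hx1⟩, rfl⟩
  have hx1 : ‖e x‖ = 1 := hx1
  have hxA : ‖x‖ ≤ A := by
    have := h₁ x
    rw [hx1, div_le_iff₀ hA0] at this
    linarith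
  have hx0 : 0 < ‖x‖ := by
    by_contra hcon
    have := h₂ x
    nlinarith
  have s1 : Metric.infDist (e x) ((G.map (e : E →ₗ[ℝ] E') : Submodule ℝ E') : Set E')
      ≤ A * Metric.infDist x (G : Set E) := by
    apply infDist_le_mul_aux hne hA0
    intro g hg
    refine ⟨e g, ⟨g, hg, rfl⟩, ?_⟩
    rw [dist_eq_norm, dist_eq_norm, ← map_sub]
    exact h₂ _
  have s2 : Metric.infDist x (G : Set E)
      ≤ ‖x‖ * Metric.infDist (‖x‖⁻¹ • x) (G : Set E) := by
    apply infDist_le_mul_aux hne hx0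
    intro g hg
    refine ⟨‖x‖ • g, G.smul_mem _ hg, le_of_eq ?_⟩
    have : x - ‖x‖ • g = ‖x‖ • (‖x‖⁻¹ • x - g) := by
      rw [smul_sub, smul_inv_smul₀ hx0.ne']
    rw [dist_eq_norm, dist_eq_norm, this, norm_smul, norm_norm]
  have s3 : Metric.infDist (‖x‖⁻¹ • x) (G : Set E) ≤ verdierDist F G := by
    apply le_csSup hbdd
    refine ⟨_, ⟨F.smul_mem _ hxF, ?_⟩, rfl⟩
    rw [norm_smul, norm_inv, norm_norm, inv_mul_cancel₀ hx0.ne']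
  calc _ ≤ A * Metric.infDist x (G : Set E) := s1
    _ ≤ A * (A * verdierDist F G) := by
      gcongr
      exact s2.trans (mul_le_mul hxA s3 Metric.infDist_nonneg hA0.le)
    _ = A ^ 2 * verdierDist F G := by ring
end
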